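/- Assume the vertex c is controllable and let 𝒯_i be an equivalence class of neighbors of c such that 𝒯_i ⊆ D^d. Then ∑_{v∈𝒯_i} ∂_{p_v} ∈ 𝓜 and ∑_{v∈𝒯_i} x_v ∂_{p_v} ∈ 𝓜. -/

import Mathlib

/-!
Let `N` be the space of polynomial families `g` with `∑_v g_v(x_v) ∂_{p_v} ∈ 𝓜` and `g_c = 0`.
Bracketing with `∂_{q_c}` shows that `N` is stable under `g ↦ g'`, and the double bracket
`[∑ h_v(x_v) ∂_{p_v}, [∑ g_v(x_v) ∂_{p_v}, X₀]]` shows that it is stable under `(g, h) ↦ (g h)'`.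
Up to a multiple of `∂_{p_c}`, the field `[∂_{q_c}, X₀]` is the family `f̃` of adjusted polynomials.

Since `(α t · β t)' = 2 α β t`, the functions `α` on the vertices with `α t ∈ N` form an algebra
`A`, and by the finite Stone–Weierstrass theorem it suffices that `A` separates two vertices as
soon as their polynomials differ, and vanishes identically at no neighbor of `c`. The indicator `e`
of the support of `A` lies in `A`. If the part of `f̃` off this support were nonzero, adjustedness
would make its derivative one order below the top of the form `a t + b` with `a b = 0`, and the
square of that derivative would yield the slope `a²` outside the support of `A`. So `f̃ = e f̃`, and
because `e t^k` is an eigenvector of `g ↦ (e t g)'` with eigenvalue `k + 1`, all homogeneous parts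
of `f̃` lie in `N`. Hence `A` contains the coefficients of `f̃` in every positive degree, together
with the products of the constant coefficients with those of degree at least two; adjusted
polynomials of degree one have no constant coefficient.
-/

open scoped Classical
open Polynomial

noncomputable section

/-- Phase space ℝ^{2|V|}: positions `q = x.1` and momenta `p = x.2`. -/
abbrev Phase (V : Type) := (V → ℝ) × (V → ℝ)

/-- Lie bracket of vector fields: `[Y,Z](x) = DZ(x)·Y(x) − DY(x)·Z(x)`. -/
def lieB {V : Type} [Fintype V] (Y Z : Phase V → Phase V) : Phase V → Phase V :=
  fun x => fderiv ℝ Z x (Y x) - fderiv ℝ Y x (Z x)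

/-- The constant vector field `∂_{p_v}`. -/
def dp {V : Type} [Fintype V] [DecidableEq V] (v : V) : Phase V → Phase V :=
  fun _ => (0, Pi.single v 1)

/-- The constant vector field `∂_{q_v}`. -/
def dq {V : Type} [Fintype V] [DecidableEq V] (v : V) : Phase V → Phase V :=
  fun _ => (Pi.single v 1, 0)

/-- The constant vector field `∑_{v ∈ A} ∂_{p_v}`. -/
def dpSum {V : Type} [Fintype V] [DecidableEq V] (A : Finset V) : Phase V → Phase V :=
  fun _ => (0, ∑ v ∈ A, Pi.single v 1)

/-- The constant vector field `∑_{v ∈ A} ∂_{q_v}`. -/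
def dqSum {V : Type} [Fintype V] [DecidableEq V] (A : Finset V) : Phase V → Phase V :=
  fun _ => (∑ v ∈ A, Pi.single v 1, 0)

/-- The drift vector field
`X₀ = −∑_{v∈V*} γ_v p_v ∂_{p_v} + ∑_{v∈V} (p_v ∂_{q_v} − U_v'(q_v) ∂_{p_v})
      − ∑_{{u,v}∈E} V_{uv}'(q_u − q_v)(∂_{p_u} − ∂_{p_v})`,
written componentwise (using the symmetry `V_{vu}(x) = V_{uv}(−x)` of the
interaction potentials, the `∂_{p_v}`-component of the edge term at a vertex `v` is
`−∑_{w ~ v} V_{vw}'(q_v − q_w)`). -/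
def X0 {V : Type} [Fintype V] [DecidableEq V] (G : SimpleGraph V) [DecidableRel G.Adj]
    (γ : V → ℝ) (U : V → ℝ → ℝ) (Vp : V → V → Polynomial ℝ) : Phase V → Phase V :=
  fun x =>
    (x.2, fun v =>
      -(γ v) * x.2 v - deriv (U v) (x.1 v) -
        ∑ w ∈ Finset.univ.filter (fun w => G.Adj v w),
          (derivative (Vp v w)).eval (x.1 v - x.1 w))

/-- The smallest collection `𝓜` of vector fields on `ℝ^{2|V|}` that contains `∂_{p_v}`
for every `v ∈ V*`, and is closed under linear combinations, Lie brackets,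
bracketing with `X₀`, and multiplication by smooth scalar functions. -/
inductive MM {V : Type} [Fintype V] [DecidableEq V] (Vstar : Finset V)
    (X₀ : Phase V → Phase V) : (Phase V → Phase V) → Prop
  | basic (v : V) (hv : v ∈ Vstar) : MM Vstar X₀ (dp v)
  | add {Y Z : Phase V → Phase V} : MM Vstar X₀ Y → MM Vstar X₀ Z → MM Vstar X₀ (Y + Z)
  | smul (a : ℝ) {Y : Phase V → Phase V} : MM Vstar X₀ Y → MM Vstar X₀ (a • Y)
  | lie {Y Z : Phase V → Phase V} : MM Vstar X₀ Y → MM Vstar X₀ Z → MM Vstar X₀ (lieB Y Z)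
  | lieX {Y : Phase V → Phase V} : MM Vstar X₀ Y → MM Vstar X₀ (lieB Y X₀)
  | mulS (f : Phase V → ℝ) (hf : ContDiff ℝ (⊤ : ℕ∞) f) {Y : Phase V → Phase V} :
      MM Vstar X₀ Y → MM Vstar X₀ (fun x => f x • Y x)

/-- A vertex `v` is controllable if `∂_{q_v} ∈ 𝓜` and `∂_{p_v} ∈ 𝓜`. -/
def Controllable {V : Type} [Fintype V] [DecidableEq V] (Vstar : Finset V)
    (X₀ : Phase V → Phase V) (v : V) : Prop :=
  MM Vstar X₀ (dq v) ∧ MM Vstar X₀ (dp v)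

/-- Two polynomials are equivalent if `f(·) = g(· + δ)` for some `δ ∈ ℝ`. -/
def PolyEquiv (f g : Polynomial ℝ) : Prop :=
  ∃ δ : ℝ, ∀ x : ℝ, f.eval x = g.eval (x + δ)

/-- The set 𝒯 of neighbors ("targets") of a vertex `c`. -/
def Tset {V : Type} [Fintype V] [DecidableEq V] (G : SimpleGraph V) [DecidableRel G.Adj]
    (c : V) : Finset V :=
  Finset.univ.filter fun w => G.Adj c w

/-- The shift making a polynomial `g = ∑ a_i t^i/i!` of degree `k` adjusted
(i.e. killing the coefficient `a_{k−1}`), namely `a_{k−1}/a_k = coeff_{k−1}/(k·coeff_k)`. -/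
def adjShift (g : Polynomial ℝ) : ℝ :=
  g.coeff (g.natDegree - 1) / ((g.natDegree : ℝ) * g.leadingCoeff)

/-- The adjusted representation `g̃(·) = g(· − a_{k−1}/a_k)` of a polynomial `g`. -/
def adjRep (g : Polynomial ℝ) : Polynomial ℝ :=
  g.comp (Polynomial.X - Polynomial.C (adjShift g))

/-- `f̃_v`, the adjusted representation of `V''_{cv}`. -/
def ft {V : Type} (Vp : V → V → Polynomial ℝ) (c v : V) : Polynomial ℝ :=
  adjRep (derivative (derivative (Vp c v)))

/-- `d = max_{v∈𝒯} d_v`, the maximal degree of the adjusted polynomials `f̃_v`, `v ∈ 𝒯`. -/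
def dmax {V : Type} [Fintype V] [DecidableEq V] (G : SimpleGraph V) [DecidableRel G.Adj]
    (Vp : V → V → Polynomial ℝ) (c : V) : ℕ :=
  (Tset G c).sup fun v => (ft Vp c v).natDegree

/-- `D^d = {v ∈ 𝒯 : d_v = d}`, the neighbors of `c` of maximal adjusted degree. -/
def Dd {V : Type} [Fintype V] [DecidableEq V] (G : SimpleGraph V) [DecidableRel G.Adj]
    (Vp : V → V → Polynomial ℝ) (c : V) : Finset V :=
  (Tset G c).filter fun v => (ft Vp c v).natDegree = dmax G Vp c

/-- The coefficient `b_{vℓ}` in `f̃_v(x) = ∑_j b_{vj} x^j/j!`, i.e. `b_{vℓ} = ℓ!·coeff_ℓ(f̃_v)`. -/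
def bcoef {V : Type} (Vp : V → V → Polynomial ℝ) (c v : V) (ℓ : ℕ) : ℝ :=
  (Nat.factorial ℓ : ℝ) * (ft Vp c v).coeff ℓ

/-- The scalar function `x_v = q_c − q_v + δ_{cv}`, with `δ_{cv}` the adjusting shift
of `V''_{cv}`. -/
def xv {V : Type} [Fintype V] (Vp : V → V → Polynomial ℝ) (c v : V) : Phase V → ℝ :=
  fun x => x.1 c - x.1 v + adjShift (derivative (derivative (Vp c v)))

/-! ### Stone–Weierstrass on a finite set -/

section Interpolation

variable {ι K : Type*} [Field K]

lemma exists_mem_eq_one_and_eq_zero (A : NonUnitalSubalgebra K (ι → K)) {w : ι}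
    (hw : ∃ α ∈ A, α w ≠ 0) (s : Finset ι) (hs : ∀ u ∈ s, ∃ α ∈ A, α u ≠ α w) :
    ∃ α ∈ A, α w = 1 ∧ ∀ u ∈ s, α u = 0 := by
  induction s using Finset.induction_on with
  | empty =>
    obtain ⟨α, hα, hαw⟩ := hw
    exact ⟨(α w)⁻¹ • α, A.smul_mem _ hα, by simp [hαw], by simp⟩
  | insert u s _ ih =>
    obtain ⟨α, hα, hαw, hαs⟩ := ih fun v hv => hs v (Finset.mem_insert_of_mem hv)
    obtain ⟨β, hβ, hβu⟩ := hs u (Finset.mem_insert_self u s)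
    refine ⟨(β w - β u)⁻¹ • (α * β - β u • α),
      A.smul_mem _ (A.sub_mem (A.mul_mem hα hβ) (A.smul_mem _ hα)), ?_, fun v hv => ?_⟩
    · simp [hαw, inv_mul_cancel₀ (sub_ne_zero.2 hβu.symm)]
    · obtain rfl | hv := Finset.mem_insert.1 hv
      · simp [mul_comm]
      · simp [hαs v hv]

lemma mem_of_forall_not_separated [Finite ι] (A : NonUnitalSubalgebra K (ι → K)) {f : ι → K}
    (hzero : ∀ v, (∀ α ∈ A, α v = 0) → f v = 0)
    (heq : ∀ v w, (∀ α ∈ A, α v = α w) → f v = f w) : f ∈ A := by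
  have hinterp (s : Finset ι) : ∃ α ∈ A, ∀ v ∈ s, α v = f v := by
    induction s using Finset.induction_on with
    | empty => exact ⟨0, zero_mem A, by simp⟩
    | insert w s _ ih =>
      obtain ⟨α, hα, hαs⟩ := ih
      by_cases hfree : (∃ β ∈ A, β w ≠ 0) ∧ ∀ u ∈ s, ∃ β ∈ A, β u ≠ β w
      · obtain ⟨β, hβ, hβw, hβs⟩ := exists_mem_eq_one_and_eq_zero A hfree.1 s hfree.2
        exact ⟨α + (f w - α w) • β, add_mem hα (A.smul_mem _ hβ),
          by simpa [hβw] using fun v hv => by simp [hαs v hv, hβs v hv]⟩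
      · have hαw : α w = f w := by
          rw [not_and_or] at hfree
          push Not at hfree
          obtain hw | ⟨u, hu, huw⟩ := hfree
          · rw [hw α hα, hzero w hw]
          · rw [← huw α hα, hαs u hu, heq u w huw]
        exact ⟨α, hα, by simpa [hαw] using hαs⟩
  have := Fintype.ofFinite ι
  obtain ⟨α, hα, hαf⟩ := hinterp Finset.univ
  rwa [← funext fun v => hαf v (Finset.mem_univ v)]

end Interpolation

lemma mem_of_sum_eigenvectors_mem {ι K M : Type*} [Field K] [AddCommGroup M] [Module K M]
    {T : Module.End K M} {N : Submodule K M} (hN : N ≤ N.comap T) {s : Finset ι} {μ : ι → K}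
    (hμ : Set.InjOn μ s) {x : ι → M} (hx : ∀ i ∈ s, T (x i) = μ i • x i)
    (hsum : ∑ i ∈ s, x i ∈ N) {i : ι} (hi : i ∈ s) : x i ∈ N := by
  have hproj : aeval T (Lagrange.basis s μ i) (∑ j ∈ s, x j) = x i := by
    rw [map_sum, Finset.sum_eq_single_of_mem i hi]
    · rw [Module.End.aeval_apply_of_mem_apply_eq_smul (hx i hi),
        Lagrange.eval_basis_self hμ hi, one_smul]
    · intro j hj hji
      rw [Module.End.aeval_apply_of_mem_apply_eq_smul (hx j hj),
        Lagrange.eval_basis_of_ne hji.symm hj, zero_smul]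
  rw [← hproj]
  exact aeval_apply_smul_mem_of_le_comap hsum _ T hN

/-! ### Spaces of polynomial families closed under the derivative of the product -/

/-- A polynomial is adjusted if it is not constant and its subleading coefficient vanishes. -/
def IsAdjusted {R : Type*} [Semiring R] (g : R[X]) : Prop :=
  g.natDegree ≠ 0 ∧ g.nextCoeff = 0

lemma IsAdjusted.coeff_zero_eq_zero {R : Type*} [Semiring R] {g : R[X]} (hg : IsAdjusted g)
    (hdeg : g.natDegree ≤ 1) : g.coeff 0 = 0 := by
  have hnext := hg.2
  rwa [nextCoeff_of_natDegree_pos (Nat.pos_of_ne_zero hg.1), Nat.sub_eq_zero_of_le hdeg] at hnext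

lemma coeff_succ_mul_coeff_eq_zero {R : Type*} [Semiring R] {g : R[X]} {n : ℕ}
    (hg : g ≠ 0 → IsAdjusted g) (hdeg : g.natDegree ≤ n + 1) :
    g.coeff (n + 1) * g.coeff n = 0 := by
  by_cases htop : g.coeff (n + 1) = 0
  · rw [htop, zero_mul]
  · have hnext := (hg fun h => htop (by rw [h, coeff_zero])).2
    have hdeg_eq : g.natDegree = n + 1 := le_antisymm hdeg (le_natDegree_of_ne_zero htop)
    rw [nextCoeff_of_natDegree_pos (by omega), hdeg_eq, Nat.add_sub_cancel] at hnext
    rw [hnext, mul_zero]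

section Families

variable {ι R K : Type*} [CommSemiring R] [Field K]

/-- The family `v ↦ α_v t^k`, depending linearly on `α`. -/
def monomialFamily (k : ℕ) : (ι → R) →ₗ[R] (ι → R[X]) :=
  (monomial k).compLeft ι

@[simp] lemma monomialFamily_apply (k : ℕ) (α : ι → R) (v : ι) :
    monomialFamily k α v = monomial k (α v) := rfl

/-- The operator `g ↦ (α t g)'`, taken componentwise. Where `α = 1` it is `1 + t d/dt`, whose
eigenvectors are the monomials. -/
def eulerOperator (α : ι → R) : Module.End R (ι → R[X]) :=
  derivative.compLeft ι ∘ₗ LinearMap.mulLeft R (monomialFamily 1 α)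

lemma eulerOperator_apply (α : ι → R) (g : ι → R[X]) :
    eulerOperator α g = fun v => derivative (monomialFamily 1 α v * g v) := rfl

lemma eulerOperator_monomialFamily (α β : ι → R) (k : ℕ) :
    eulerOperator α (monomialFamily k β) = ((k : R) + 1) • monomialFamily k (α * β) := by
  funext v
  simp [eulerOperator_apply, monomial_mul_monomial, smul_monomial, mul_comm]

lemma sum_monomialFamily_coeff {g : ι → R[X]} {d : ℕ} (hd : ∀ v, (g v).natDegree < d) :
    ∑ k ∈ Finset.range d, monomialFamily k (fun v => (g v).coeff k) = g := by
  funext v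
  rw [Finset.sum_apply]
  exact ((g v).as_sum_range' d (hd v)).symm

lemma exists_forall_natDegree_lt [Finite ι] (g : ι → R[X]) : ∃ d, ∀ v, (g v).natDegree < d := by
  obtain ⟨d, hd⟩ := Set.finite_range (fun v => (g v).natDegree) |>.bddAbove
  exact ⟨d + 1, fun v => Nat.lt_succ_of_le (hd ⟨v, rfl⟩)⟩

/-- The closure properties of the space of families `g` with `∑_v g_v(x_v) ∂_{p_v} ∈ 𝓜`:
stability under `g ↦ g'` and `(g, h) ↦ (g h)'`, both taken componentwise. -/
structure DerClosed (N : Submodule R (ι → R[X])) : Prop where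
  derivative_mem : ∀ {g}, g ∈ N → (fun v => derivative (g v)) ∈ N
  derivative_mul_mem : ∀ {g h}, g ∈ N → h ∈ N → (fun v => derivative (g v * h v)) ∈ N

namespace DerClosed

lemma iterate_derivative_mem {N : Submodule R (ι → R[X])} (hN : DerClosed N) {g : ι → R[X]}
    (hg : g ∈ N) (n : ℕ) : (fun v => derivative^[n] (g v)) ∈ N := by
  induction n with
  | zero => exact hg
  | succ n ih => simpa only [Function.iterate_succ_apply'] using hN.derivative_mem ih

variable [CharZero K] {N : Submodule K (ι → K[X])}

lemma monomialFamily_mem_of_succ (hN : DerClosed N) {k : ℕ} {α : ι → K}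
    (h : monomialFamily (k + 1) α ∈ N) : monomialFamily k α ∈ N := by
  have hk : (k : K) + 1 ≠ 0 := Nat.cast_add_one_ne_zero k
  convert N.smul_mem ((k : K) + 1)⁻¹ (hN.derivative_mem h) using 1
  funext v
  simp [smul_monomial, mul_comm (α v), hk]

lemma monomialFamily_one_mem (hN : DerClosed N) {k : ℕ} {α : ι → K}
    (h : monomialFamily (k + 1) α ∈ N) : monomialFamily 1 α ∈ N := by
  induction k with
  | zero => exact h
  | succ k ih => exact ih (hN.monomialFamily_mem_of_succ h)

lemma monomialFamily_mul_mem (hN : DerClosed N) {k l : ℕ} {α β : ι → K}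
    (hα : monomialFamily k α ∈ N) (hβ : monomialFamily (l + 1) β ∈ N) :
    monomialFamily (k + l) (α * β) ∈ N := by
  have hkl : (k : K) + l + 1 ≠ 0 := mod_cast Nat.succ_ne_zero (k + l)
  convert N.smul_mem ((k : K) + l + 1)⁻¹ (hN.derivative_mul_mem hα hβ) using 1
  funext v
  simp [monomial_mul_monomial, smul_monomial, mul_comm (α v * β v), ← add_assoc, hkl]

/-- The algebra of functions `α` for which the linear family `α t` belongs to `N`. It is closed
under products because `(α t · β t)' = 2 α β t`. -/
def slopeAlgebra (hN : DerClosed N) : NonUnitalSubalgebra K (ι → K) where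
  __ := N.comap (monomialFamily 1)
  mul_mem' hα hβ := hN.monomialFamily_mul_mem (l := 0) hα hβ

lemma mem_slopeAlgebra (hN : DerClosed N) {α : ι → K} :
    α ∈ hN.slopeAlgebra ↔ monomialFamily 1 α ∈ N := Iff.rfl

lemma monomialFamily_mul_coeff_mem [Finite ι] (hN : DerClosed N) {α : ι → K}
    (hα : α ∈ hN.slopeAlgebra) (hidem : IsIdempotentElem α) {g : ι → K[X]} (hg : g ∈ N) (k : ℕ) :
    monomialFamily k (α * fun v => (g v).coeff k) ∈ N := by
  obtain ⟨d, hd⟩ := exists_forall_natDegree_lt g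
  by_cases hk : k < d
  swap
  · convert N.zero_mem
    funext v
    simp [coeff_eq_zero_of_natDegree_lt ((hd v).trans_le (not_lt.1 hk))]
  let x (j : ℕ) : ι → K[X] := eulerOperator α (monomialFamily j fun v => (g v).coeff j)
  have hx : ∀ j, x j = ((j : K) + 1) • monomialFamily j (α * fun v => (g v).coeff j) :=
    fun j => eulerOperator_monomialFamily _ _ j
  have hsum : ∑ j ∈ Finset.range d, x j ∈ N := by
    rw [← map_sum, sum_monomialFamily_coeff hd]
    exact hN.derivative_mul_mem hα hg
  have hxk : x k ∈ N := mem_of_sum_eigenvectors_mem (T := eulerOperator α)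
    (s := Finset.range d) (μ := fun j : ℕ => (j : K) + 1) (x := x)
    (fun h hh => hN.derivative_mul_mem hα hh)
    (fun i _ j _ hij => Nat.cast_injective (add_right_cancel hij))
    (fun j _ => by rw [hx, map_smul, eulerOperator_monomialFamily, ← mul_assoc, hidem.eq])
    hsum (Finset.mem_range.2 hk)
  rwa [hx, N.smul_mem_iff (Nat.cast_add_one_ne_zero k)] at hxk

lemma C_mul_mem [Finite ι] (hN : DerClosed N) {α : ι → K} (hα : α ∈ hN.slopeAlgebra)
    (hidem : IsIdempotentElem α) {g : ι → K[X]} (hg : g ∈ N) : (fun v => C (α v) * g v) ∈ N := by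
  obtain ⟨d, hd⟩ := exists_forall_natDegree_lt g
  convert sum_mem fun k (_ : k ∈ Finset.range d) =>
    hN.monomialFamily_mul_coeff_mem hα hidem hg k using 1
  funext v
  conv_lhs => rw [← sum_monomialFamily_coeff hd]
  simp [Finset.mul_sum, C_mul_monomial]

lemma coeff_one_sq_mem_slopeAlgebra (hN : DerClosed N) {g : ι → K[X]} (hg : g ∈ N)
    (hdeg : ∀ v, (g v).natDegree ≤ 1) (hprod : ∀ v, (g v).coeff 1 * (g v).coeff 0 = 0) :
    (fun v => (g v).coeff 1 ^ 2) ∈ hN.slopeAlgebra := by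
  rw [mem_slopeAlgebra]
  convert N.smul_mem (2 : K)⁻¹ (hN.derivative_mul_mem hg hg) using 1
  funext v
  have hsq : g v * g v = monomial 2 ((g v).coeff 1 ^ 2) + C ((g v).coeff 0 ^ 2) := by
    have hC : C ((g v).coeff 1) * C ((g v).coeff 0) = 0 := by rw [← C_mul, hprod, C_0]
    rw [← C_mul_X_pow_eq_monomial, C_pow, C_pow]
    conv_lhs => rw [eq_X_add_C_of_natDegree_le_one (hdeg v)]
    linear_combination 2 * X * hC
  rw [Pi.smul_apply, hsq, derivative_add, derivative_C, derivative_monomial]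
  simp [smul_monomial, mul_comm _ (2 : K)]

/-- The derivative of `F` of order one less than its top degree is `a t + b` with `a b = 0`, since
the members of `F` of top degree are adjusted. Its square yields the slope `a²`. -/
lemma exists_mem_slopeAlgebra_ne_zero [Finite ι] (hN : DerClosed N) {F : ι → K[X]} (hF : F ∈ N)
    (hadj : ∀ v, F v ≠ 0 → IsAdjusted (F v)) (hne : F ≠ 0) :
    ∃ α ∈ hN.slopeAlgebra, ∃ v, F v ≠ 0 ∧ α v ≠ 0 := by
  obtain ⟨u, hu⟩ := Function.ne_iff.1 hne
  have : Nonempty ι := ⟨u⟩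
  obtain ⟨w, hmax⟩ := Finite.exists_max fun v => (F v).natDegree
  obtain ⟨n, hn⟩ := Nat.exists_eq_add_one_of_ne_zero
    (((Nat.pos_of_ne_zero (hadj u hu).1).trans_le (hmax u)).ne')
  have hcoeff_one (v : ι) :
      (derivative^[n] (F v)).coeff 1 = (n + 1).descFactorial n • (F v).coeff (n + 1) := by
    rw [coeff_iterate_derivative, add_comm 1 n]
  have hprod (v : ι) : (derivative^[n] (F v)).coeff 1 * (derivative^[n] (F v)).coeff 0 = 0 := by
    rw [hcoeff_one, coeff_iterate_derivative, zero_add, smul_mul_smul_comm,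
      coeff_succ_mul_coeff_eq_zero (hadj v) (hn ▸ hmax v), smul_zero]
  refine ⟨_, hN.coeff_one_sq_mem_slopeAlgebra (hN.iterate_derivative_mem hF n) (fun v => ?_) hprod,
    w, ?_, ?_⟩
  · exact (natDegree_iterate_derivative _ n).trans (by have := hmax v; omega)
  · exact ne_zero_of_natDegree_gt (n := n) (by omega)
  · have hlead : (F w).coeff (n + 1) ≠ 0 := by
      rw [← hn, coeff_natDegree, leadingCoeff_ne_zero]
      exact ne_zero_of_natDegree_gt (n := n) (by omega)
    have hfact : (n + 1).descFactorial n ≠ 0 := by simp [Nat.descFactorial_eq_zero_iff_lt]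
    rw [hcoeff_one]
    exact pow_ne_zero 2 (smul_ne_zero hfact hlead)

/-- The set of indices at which some slope does not vanish. -/
def slopeSupport (hN : DerClosed N) : Set ι :=
  {v | ∃ α ∈ hN.slopeAlgebra, α v ≠ 0}

lemma mem_slopeSupport (hN : DerClosed N) {v : ι} :
    v ∈ hN.slopeSupport ↔ ∃ α ∈ hN.slopeAlgebra, α v ≠ 0 := Iff.rfl

lemma notMem_slopeSupport (hN : DerClosed N) {v : ι} :
    v ∉ hN.slopeSupport ↔ ∀ α ∈ hN.slopeAlgebra, α v = 0 := by
  simp [mem_slopeSupport]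

lemma isIdempotentElem_indicator_slopeSupport (hN : DerClosed N) :
    IsIdempotentElem (hN.slopeSupport.indicator 1 : ι → K) := by
  rw [IsIdempotentElem, ← Set.inter_indicator_one, Set.inter_self]

lemma indicator_slopeSupport_mem [Finite ι] (hN : DerClosed N) :
    hN.slopeSupport.indicator 1 ∈ hN.slopeAlgebra := by
  refine mem_of_forall_not_separated _ (fun v hv => ?_) fun v w hvw => ?_
  · exact Set.indicator_of_notMem (hN.notMem_slopeSupport.2 hv) _
  · have hiff : (∃ α ∈ hN.slopeAlgebra, α v ≠ 0) ↔ ∃ α ∈ hN.slopeAlgebra, α w ≠ 0 :=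
      exists_congr fun α => and_congr_right fun hα => by rw [hvw α hα]
    simp only [Set.indicator_apply, mem_slopeSupport, hiff, Pi.one_apply]

/-- Otherwise the part of `F` off the support of the slope algebra would produce a new slope. -/
lemma eq_zero_of_notMem_slopeSupport [Finite ι] (hN : DerClosed N) {F : ι → K[X]} (hF : F ∈ N)
    (hadj : ∀ v, F v ≠ 0 → IsAdjusted (F v)) {v : ι} (hv : v ∉ hN.slopeSupport) :
    F v = 0 := by
  let rest : ι → K[X] := F - fun w => C (hN.slopeSupport.indicator 1 w) * F w
  have hrest : rest ∈ N :=
    sub_mem hF (hN.C_mul_mem hN.indicator_slopeSupport_mem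
      hN.isIdempotentElem_indicator_slopeSupport hF)
  have hrest_on {w : ι} (hw : w ∈ hN.slopeSupport) : rest w = 0 := by simp [rest, hw]
  have hrest_off {w : ι} (hw : w ∉ hN.slopeSupport) : rest w = F w := by simp [rest, hw]
  rw [← hrest_off hv]
  by_contra hrest_v
  obtain ⟨α, hα, w, hrest_w, hαw⟩ := hN.exists_mem_slopeAlgebra_ne_zero hrest
    (fun w hw => by
      have hwS : w ∉ hN.slopeSupport := fun h => hw (hrest_on h)
      rw [hrest_off hwS] at hw ⊢
      exact hadj w hw)
    (Function.ne_iff.2 ⟨v, hrest_v⟩)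
  exact hrest_w (hrest_on ⟨α, hα, hαw⟩)

lemma monomialFamily_coeff_mem [Finite ι] (hN : DerClosed N) {F : ι → K[X]} (hF : F ∈ N)
    (hadj : ∀ v, F v ≠ 0 → IsAdjusted (F v)) (k : ℕ) :
    monomialFamily k (fun v => (F v).coeff k) ∈ N := by
  convert hN.monomialFamily_mul_coeff_mem hN.indicator_slopeSupport_mem
    hN.isIdempotentElem_indicator_slopeSupport hF k using 2
  funext v
  by_cases hv : v ∈ hN.slopeSupport
  · simp [hv]
  · have hFv : F v = 0 := hN.eq_zero_of_notMem_slopeSupport hF hadj hv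
    simp [hFv]

lemma eq_of_forall_slope_eq [Finite ι] (hN : DerClosed N) {F : ι → K[X]} (hF : F ∈ N)
    (hadj : ∀ v, F v ≠ 0 → IsAdjusted (F v)) {v w : ι}
    (hvw : ∀ α ∈ hN.slopeAlgebra, α v = α w) : F v = F w := by
  have hcoeff := hN.monomialFamily_coeff_mem hF hadj
  have hpos (k : ℕ) : (F v).coeff (k + 1) = (F w).coeff (k + 1) :=
    hvw _ (hN.monomialFamily_one_mem (hcoeff (k + 1)))
  have hzero : (F v).coeff 0 = (F w).coeff 0 := by
    by_cases htop : ∃ k, (F v).coeff (k + 2) ≠ 0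
    · -- The product of the coefficients of degrees `0` and `k + 2` is a slope.
      obtain ⟨k, hk⟩ := htop
      have hprod := hN.monomialFamily_mul_mem (hcoeff 0) (hcoeff (k + 2))
      rw [zero_add] at hprod
      have hprod_eq := hvw _ (hN.monomialFamily_one_mem hprod)
      simp only [Pi.mul_apply, ← hpos (k + 1)] at hprod_eq
      exact mul_right_cancel₀ hk hprod_eq
    · push Not at htop
      have hlin (u : ι) (hu : ∀ k, (F u).coeff (k + 2) = 0) : (F u).coeff 0 = 0 := by
        obtain hFu | hFu := eq_or_ne (F u) 0
        · rw [hFu, coeff_zero]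
        · exact (hadj u hFu).coeff_zero_eq_zero <| natDegree_le_iff_coeff_eq_zero.2 fun m hm => by
            obtain ⟨k, rfl⟩ := Nat.exists_eq_add_of_le' hm
            exact hu k
      rw [hlin v htop, hlin w fun k => (hpos (k + 1)).symm.trans (htop k)]
  ext k
  cases k with
  | zero => exact hzero
  | succ k => exact hpos k

theorem mem_slopeAlgebra_of_forall_eq [Finite ι] (hN : DerClosed N) {F : ι → K[X]} (hF : F ∈ N)
    (hadj : ∀ v, F v ≠ 0 → IsAdjusted (F v)) {f : ι → K} (hzero : ∀ v, F v = 0 → f v = 0)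
    (heq : ∀ v w, F v = F w → f v = f w) : f ∈ hN.slopeAlgebra :=
  mem_of_forall_not_separated _
    (fun v hv => hzero v (hN.eq_zero_of_notMem_slopeSupport hF hadj (hN.notMem_slopeSupport.2 hv)))
    fun v w hvw => heq v w (hN.eq_of_forall_slope_eq hF hadj hvw)

end DerClosed

end Families

/-! ### Adjusted representations -/

lemma nextCoeff_taylor {R : Type*} [CommSemiring R] (r : R) (g : R[X]) :
    (taylor r g).nextCoeff = g.nextCoeff + g.natDegree * g.leadingCoeff * r := by
  obtain hg | hg := Nat.eq_zero_or_pos g.natDegree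
  · simp [nextCoeff, hg]
  obtain ⟨n, hn⟩ : ∃ n, g.natDegree = n + 1 := ⟨g.natDegree - 1, by omega⟩
  have hlin : (hasseDeriv n g).natDegree < 2 := by
    rw [Nat.lt_succ_iff, natDegree_le_iff_coeff_eq_zero]
    intro m hm
    rw [hasseDeriv_coeff, coeff_eq_zero_of_natDegree_lt (by omega), mul_zero]
  rw [nextCoeff_of_natDegree_pos (by rwa [natDegree_taylor]), nextCoeff_of_natDegree_pos hg,
    natDegree_taylor, leadingCoeff, hn, Nat.add_sub_cancel, taylor_coeff,
    eval_eq_sum_range' hlin]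
  simp [Finset.sum_range_succ, hasseDeriv_coeff, add_comm 1 n]

lemma adjShift_eq (g : ℝ[X]) : adjShift g = g.nextCoeff / (g.natDegree * g.leadingCoeff) := by
  obtain hg | hg := Nat.eq_zero_or_pos g.natDegree
  · simp [adjShift, hg]
  · rw [adjShift, nextCoeff_of_natDegree_pos hg]

lemma adjRep_eq_taylor (g : ℝ[X]) : adjRep g = taylor (-adjShift g) g := by
  rw [adjRep, taylor_apply, C_neg, sub_eq_add_neg]

lemma eval_adjRep (g : ℝ[X]) (x : ℝ) : (adjRep g).eval (x + adjShift g) = g.eval x := by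
  simp [adjRep]

lemma natDegree_mul_leadingCoeff_ne_zero {g : ℝ[X]} (hg : g.natDegree ≠ 0) :
    (g.natDegree : ℝ) * g.leadingCoeff ≠ 0 :=
  mul_ne_zero (Nat.cast_ne_zero.2 hg)
    (leadingCoeff_ne_zero.2 (ne_zero_of_natDegree_gt (Nat.pos_of_ne_zero hg)))

lemma isAdjusted_adjRep {g : ℝ[X]} (hg : g.natDegree ≠ 0) : IsAdjusted (adjRep g) := by
  rw [adjRep_eq_taylor, IsAdjusted, natDegree_taylor, nextCoeff_taylor, mul_neg, adjShift_eq,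
    mul_div_cancel₀ _ (natDegree_mul_leadingCoeff_ne_zero hg)]
  exact ⟨hg, add_neg_cancel _⟩

lemma adjShift_taylor {g : ℝ[X]} (hg : g.natDegree ≠ 0) (δ : ℝ) :
    adjShift (taylor δ g) = adjShift g + δ := by
  have hlead := natDegree_mul_leadingCoeff_ne_zero hg
  rw [adjShift_eq, adjShift_eq, nextCoeff_taylor, natDegree_taylor, leadingCoeff_taylor,
    add_div, mul_div_cancel_left₀ _ hlead]

lemma adjRep_taylor (g : ℝ[X]) (δ : ℝ) : adjRep (taylor δ g) = adjRep g := by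
  by_cases hg : g.natDegree = 0
  · rw [eq_C_of_natDegree_eq_zero hg]
    simp [adjRep]
  · rw [adjRep_eq_taylor, adjRep_eq_taylor, adjShift_taylor hg, taylor_taylor, neg_add_rev,
      neg_add_cancel_comm]

lemma polyEquiv_iff_adjRep_eq {f g : ℝ[X]} : PolyEquiv f g ↔ adjRep f = adjRep g := by
  constructor
  · rintro ⟨δ, h⟩
    have hf : f = taylor δ g := Polynomial.funext fun x => by rw [h, taylor_eval, add_comm]
    rw [hf, adjRep_taylor]
  · intro h
    refine ⟨adjShift f - adjShift g, fun x => ?_⟩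
    rw [← eval_adjRep f, ← eval_adjRep g, h, add_assoc, sub_add_cancel]

/-! ### Vector fields attached to polynomial families -/

section Fields

variable {V : Type}

/-- The position coordinate `q_v` as a continuous linear functional on phase space. -/
def qCoord (v : V) : Phase V →L[ℝ] ℝ :=
  .proj v ∘L .fst ℝ (V → ℝ) (V → ℝ)

/-- The momentum coordinate `p_v` as a continuous linear functional on phase space. -/
def pCoord (v : V) : Phase V →L[ℝ] ℝ :=
  .proj v ∘L .snd ℝ (V → ℝ) (V → ℝ)

@[simp] lemma qCoord_apply (v : V) (x : Phase V) : qCoord v x = x.1 v := rfl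

@[simp] lemma pCoord_apply (v : V) (x : Phase V) : pCoord v x = x.2 v := rfl

variable [Fintype V]

/-- The vector field `∑_v g_v(x_v) ∂_{p_v}`, depending linearly on the family `g`. -/
def famField (Vp : V → V → ℝ[X]) (c : V) : (V → ℝ[X]) →ₗ[ℝ] (Phase V → Phase V) where
  toFun g x := (0, fun v => (g v).eval (xv Vp c v x))
  map_add' g h := by ext x v <;> simp
  map_smul' a g := by ext x v <;> simp

variable (Vp : V → V → ℝ[X]) (c : V)

lemma famField_apply (g : V → ℝ[X]) (x : Phase V) :
    famField Vp c g x = (0, fun v => (g v).eval (xv Vp c v x)) := rfl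

lemma hasFDerivAt_eval_xv (v : V) (g : ℝ[X]) (x : Phase V) :
    HasFDerivAt (fun y => g.eval (xv Vp c v y))
      ((derivative g).eval (xv Vp c v x) • (qCoord c - qCoord v)) x :=
  (g.hasDerivAt _).comp_hasFDerivAt x ((qCoord c - qCoord v).hasFDerivAt.add_const _)

lemma fderiv_famField (g : V → ℝ[X]) (x y : Phase V) :
    fderiv ℝ (famField Vp c g) x y =
      (0, fun v => (derivative (g v)).eval (xv Vp c v x) * (y.1 c - y.1 v)) := by
  have h : HasFDerivAt (famField Vp c g) _ x :=
    (hasFDerivAt_const (0 : V → ℝ) x).prodMk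
      (hasFDerivAt_pi.2 fun v => hasFDerivAt_eval_xv Vp c v (g v) x)
  rw [h.fderiv]
  rfl

variable {c} in
lemma eval_derivative_derivative_symm {v : V}
    (hsym : ∀ x : ℝ, (Vp v c).eval x = (Vp c v).eval (-x)) (x : Phase V) :
    (derivative (derivative (Vp v c))).eval (x.1 v - x.1 c) = (ft Vp c v).eval (xv Vp c v x) := by
  have hcomp : Vp v c = (Vp c v).comp (-X) := Polynomial.funext fun t => by simpa using hsym t
  rw [ft, xv, eval_adjRep, hcomp]
  simp [derivative_comp]

variable [DecidableEq V]

lemma lieB_dq (Z : Phase V → Phase V) :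
    lieB (dq c) Z = fun x => fderiv ℝ Z x (Pi.single c 1, 0) := by
  funext x
  have hconst : fderiv ℝ (dq c : Phase V → Phase V) x = 0 := fderiv_const_apply _
  simp [lieB, hconst, dq]

lemma lieB_dq_famField {g : V → ℝ[X]} (hg : g c = 0) :
    lieB (dq c) (famField Vp c g) = famField Vp c fun v => derivative (g v) := by
  rw [lieB_dq]
  funext x
  rw [fderiv_famField]
  ext v
  · rfl
  · obtain rfl | hv := eq_or_ne v c
    · simp [famField_apply, hg]
    · simp [famField_apply, hv]

lemma dpSum_eq_famField (A : Finset V) :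
    dpSum A = famField Vp c (monomialFamily 0 ((A : Set V).indicator 1)) := by
  ext x v
  · simp [dpSum, famField_apply]
  · by_cases hv : v ∈ A <;> simp [dpSum, famField_apply, Finset.sum_apply, Pi.single_apply, hv]

lemma sum_single_xv_eq_famField (A : Finset V) :
    (fun x => ((0 : V → ℝ), ∑ v ∈ A, Pi.single v (xv Vp c v x))) =
      famField Vp c (monomialFamily 1 ((A : Set V).indicator 1)) := by
  ext x v <;> simp [famField_apply, Finset.sum_apply, Pi.single_apply, Set.indicator_apply]

variable (G : SimpleGraph V) [DecidableRel G.Adj] (γ : V → ℝ) {U : V → ℝ → ℝ}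
  (Vstar : Finset V)

lemma fderiv_X0_apply (hU : ∀ v, Differentiable ℝ (deriv (U v))) (x y : Phase V) :
    fderiv ℝ (X0 G γ U Vp) x y =
      (y.2, fun v => -(γ v) * y.2 v - deriv (deriv (U v)) (x.1 v) * y.1 v -
        ∑ w ∈ Finset.univ.filter (fun w => G.Adj v w),
          (derivative (derivative (Vp v w))).eval (x.1 v - x.1 w) * (y.1 v - y.1 w)) := by
  have hpin (v : V) : HasFDerivAt (fun z : Phase V => deriv (U v) (z.1 v))
      (deriv (deriv (U v)) (x.1 v) • qCoord v) x :=
    (hU v _).hasDerivAt.comp_hasFDerivAt x (qCoord v).hasFDerivAt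
  have hint (v w : V) : HasFDerivAt (fun z : Phase V => (derivative (Vp v w)).eval (z.1 v - z.1 w))
      ((derivative (derivative (Vp v w))).eval (x.1 v - x.1 w) • (qCoord v - qCoord w)) x :=
    ((derivative (Vp v w)).hasDerivAt _).comp_hasFDerivAt x (qCoord v - qCoord w).hasFDerivAt
  have hX0 : HasFDerivAt (X0 G γ U Vp) _ x :=
    hasFDerivAt_snd.prodMk (hasFDerivAt_pi.2 fun v =>
      (((pCoord v).hasFDerivAt.const_mul (-(γ v))).sub (hpin v)).sub
        (.fun_sum fun w _ => hint v w))
  rw [hX0.fderiv]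
  ext v <;> simp

lemma lieB_famField_X0 (hU : ∀ v, Differentiable ℝ (deriv (U v))) (g : V → ℝ[X]) :
    lieB (famField Vp c g) (X0 G γ U Vp) = fun x =>
      (fun v => (g v).eval (xv Vp c v x), fun v => -(γ v) * (g v).eval (xv Vp c v x) -
        (derivative (g v)).eval (xv Vp c v x) * (x.2 c - x.2 v)) := by
  funext x
  rw [lieB, fderiv_famField, fderiv_X0_apply Vp G γ hU]
  ext v <;> simp [famField_apply, X0]

lemma lieB_famField_lieB_famField_X0 (hU : ∀ v, Differentiable ℝ (deriv (U v)))
    {g h : V → ℝ[X]} (hg : g c = 0) (hh : h c = 0) :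
    lieB (famField Vp c h) (lieB (famField Vp c g) (X0 G γ U Vp)) =
      famField Vp c fun v => derivative (g v * h v) := by
  rw [lieB_famField_X0 Vp c G γ hU]
  funext x
  have hZ : HasFDerivAt (fun y : Phase V => ((fun v => (g v).eval (xv Vp c v y), fun v =>
      -(γ v) * (g v).eval (xv Vp c v y) -
        (derivative (g v)).eval (xv Vp c v y) * (y.2 c - y.2 v)) : Phase V)) _ x :=
    (hasFDerivAt_pi.2 fun v => hasFDerivAt_eval_xv Vp c v (g v) x).prodMk
      (hasFDerivAt_pi.2 fun v => ((hasFDerivAt_eval_xv Vp c v (g v) x).const_mul (-(γ v))).sub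
        ((hasFDerivAt_eval_xv Vp c v (derivative (g v)) x).mul
          (pCoord c - pCoord v).hasFDerivAt))
  rw [lieB, hZ.fderiv, fderiv_famField]
  ext v
  · simp [famField_apply]
  · simp only [neg_smul, famField_apply, ContinuousLinearMap.prod_apply,
      ContinuousLinearMap.coe_pi', smul_apply, sub_apply, qCoord_apply, Pi.zero_apply, sub_self,
      smul_eq_mul, mul_zero, neg_apply, neg_zero, add_apply, pCoord_apply, hh, eval_zero, zero_sub,
      mul_neg, add_zero, sub_neg_eq_add, zero_add, hg, Prod.mk_sub_mk, sub_zero, Pi.sub_apply,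
      derivative_mul, eval_add, eval_mul]
    ring

variable {c} in
/-- The families `g` without component at `c` for which `∑_v g_v(x_v) ∂_{p_v} ∈ 𝓜`. The component
at `c` is excluded since `x_c` is constant. -/
def controlledFamilies {X₀ : Phase V → Phase V} (hc : Controllable Vstar X₀ c) :
    Submodule ℝ (V → ℝ[X]) where
  carrier := {g | g c = 0 ∧ MM Vstar X₀ (famField Vp c g)}
  zero_mem' := ⟨rfl, by simpa using hc.1.smul 0⟩
  add_mem' hg hh := ⟨by simp [hg.1, hh.1], by simpa using hg.2.add hh.2⟩
  smul_mem' a g hg := ⟨by simp [hg.1], by simpa using hg.2.smul a⟩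

variable {c} in
lemma derClosed_controlledFamilies (hU : ∀ v, Differentiable ℝ (deriv (U v)))
    (hc : Controllable Vstar (X0 G γ U Vp) c) :
    DerClosed (controlledFamilies Vp Vstar hc) where
  derivative_mem := by
    rintro g ⟨hg, hgM⟩
    exact ⟨by simp [hg], lieB_dq_famField Vp c hg ▸ hc.1.lie hgM⟩
  derivative_mul_mem := by
    rintro g h ⟨hg, hgM⟩ ⟨hh, hhM⟩
    exact ⟨by simp [hg], lieB_famField_lieB_famField_X0 Vp c G γ hU hg hh ▸ hhM.lie hgM.lieX⟩

/-- The family of the adjusted polynomials `f̃_v` of the neighbors `v` of `c`, extended by zero. -/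
def neighborFamily : V → ℝ[X] :=
  fun v => if v ∈ Tset G c then ft Vp c v else 0

variable (U) in
/-- The second derivative of the potential energy with respect to `q_c`. -/
def stiffness : Phase V → ℝ :=
  fun x => deriv (deriv (U c)) (x.1 c) +
    ∑ w ∈ Tset G c, (derivative (derivative (Vp c w))).eval (x.1 c - x.1 w)

lemma contDiff_stiffness (hU : ContDiff ℝ (⊤ : ℕ∞) (U c)) :
    ContDiff ℝ (⊤ : ℕ∞) (stiffness Vp c G U) := by
  have hpin : ContDiff ℝ (⊤ : ℕ∞) (deriv (deriv (U c))) :=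
    (contDiff_infty_iff_deriv.1 (contDiff_infty_iff_deriv.1 hU).2).2
  have hint (P : ℝ[X]) : ContDiff ℝ (⊤ : ℕ∞) fun t => P.eval t := by
    simpa using P.contDiff_aeval (𝕜 := ℝ) (⊤ : ℕ∞)
  exact (hpin.comp (qCoord c).contDiff).add
    (.sum fun w _ => (hint _).comp (qCoord c - qCoord w).contDiff)

lemma lieB_dq_X0 (hU : ∀ v, Differentiable ℝ (deriv (U v)))
    (hsym : ∀ v, G.Adj c v → ∀ x : ℝ, (Vp v c).eval x = (Vp c v).eval (-x)) :
    lieB (dq c) (X0 G γ U Vp) =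
      famField Vp c (neighborFamily Vp c G) - fun x => stiffness Vp c G U x • dp c x := by
  rw [lieB_dq]
  funext x
  rw [fderiv_X0_apply Vp G γ hU]
  ext v
  · simp [famField_apply, dp]
  obtain rfl | hv := eq_or_ne v c
  · have hself : neighborFamily Vp v G v = 0 := by simp [neighborFamily, Tset]
    have hsum : ∑ w ∈ Finset.univ.filter (fun w => G.Adj v w),
        (derivative (derivative (Vp v w))).eval (x.1 v - x.1 w) * (Pi.single v 1 : V → ℝ) w = 0 :=
      Finset.sum_eq_zero fun w hw => by
        rw [Pi.single_eq_of_ne (Finset.mem_filter.1 hw).2.ne', mul_zero]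
    simp only [mul_one, zero_sub, mul_sub, Finset.sum_sub_distrib, hsum, sub_zero,
      stiffness, Tset, dp, Prod.smul_mk, smul_zero, mul_zero, Pi.zero_apply, Pi.single_eq_same,
      Pi.sub_apply, famField_apply, Prod.mk_sub_mk, hself, eval_zero, Pi.smul_apply, smul_eq_mul]
    ring
  · by_cases hadj : G.Adj c v
    · simp [famField_apply, dp, hv, Pi.single_apply, neighborFamily, Tset, hadj, hadj.symm,
        eval_derivative_derivative_symm Vp (hsym v hadj)]
    · have hadj' : ¬G.Adj v c := fun h => hadj h.symm
      simp [famField_apply, dp, hv, Pi.single_apply, neighborFamily, Tset, hadj, hadj']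

variable {c} in
lemma neighborFamily_mem_controlledFamilies (hU : ∀ v, Differentiable ℝ (deriv (U v)))
    (hUc : ContDiff ℝ (⊤ : ℕ∞) (U c))
    (hsym : ∀ v, G.Adj c v → ∀ x : ℝ, (Vp v c).eval x = (Vp c v).eval (-x))
    (hc : Controllable Vstar (X0 G γ U Vp) c) :
    neighborFamily Vp c G ∈ controlledFamilies Vp Vstar hc := by
  refine ⟨by simp [neighborFamily, Tset], ?_⟩
  rw [sub_eq_iff_eq_add.1 (lieB_dq_X0 Vp c G γ hU hsym).symm]
  exact hc.1.lieX.add (.mulS _ (contDiff_stiffness Vp c G hUc) hc.2)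

lemma isAdjusted_neighborFamily (hdeg : ∀ v, G.Adj c v → 3 ≤ (Vp c v).natDegree) {v : V}
    (hv : v ∈ Tset G c) : IsAdjusted (neighborFamily Vp c G v) := by
  have h3 := hdeg v (Finset.mem_filter.1 hv).2
  rw [neighborFamily, if_pos hv]
  exact isAdjusted_adjRep (by rw [natDegree_derivative, natDegree_derivative]; omega)

lemma neighborFamily_ne_zero_iff (hdeg : ∀ v, G.Adj c v → 3 ≤ (Vp c v).natDegree) {v : V} :
    neighborFamily Vp c G v ≠ 0 ↔ v ∈ Tset G c := by
  refine ⟨fun h => by_contra fun hv => h (if_neg hv), fun hv h => ?_⟩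
  exact (isAdjusted_neighborFamily Vp c G hdeg hv).1 (by rw [h, natDegree_zero])

/-- The equivalence class `𝒯_i` of the neighbor `w` of `c`. -/
def neighborClass (w : V) : Finset V :=
  (Tset G c).filter fun v =>
    PolyEquiv (derivative (derivative (Vp c v))) (derivative (derivative (Vp c w)))

lemma mem_neighborClass_iff (hdeg : ∀ v, G.Adj c v → 3 ≤ (Vp c v).natDegree) {v w : V}
    (hw : w ∈ Tset G c) :
    v ∈ neighborClass Vp c G w ↔ neighborFamily Vp c G v = neighborFamily Vp c G w := by
  by_cases hv : v ∈ Tset G c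
  · simp [neighborClass, neighborFamily, hv, hw, ft, polyEquiv_iff_adjRep_eq]
  · have hne := (neighborFamily_ne_zero_iff Vp c G hdeg).2 hw
    have hv₀ : neighborFamily Vp c G v = 0 := if_neg hv
    simp [neighborClass, hv, hv₀, hne.symm]

variable {c} in
lemma monomialFamily_one_neighborClass_mem (hU : ∀ v, Differentiable ℝ (deriv (U v)))
    (hUc : ContDiff ℝ (⊤ : ℕ∞) (U c))
    (hsym : ∀ v, G.Adj c v → ∀ x : ℝ, (Vp v c).eval x = (Vp c v).eval (-x))
    (hdeg : ∀ v, G.Adj c v → 3 ≤ (Vp c v).natDegree)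
    (hc : Controllable Vstar (X0 G γ U Vp) c) {w : V} (hw : w ∈ Tset G c) :
    monomialFamily 1 ((neighborClass Vp c G w : Set V).indicator 1) ∈
      controlledFamilies Vp Vstar hc := by
  have hne {v : V} := neighborFamily_ne_zero_iff Vp c G hdeg (v := v)
  have hclass {v : V} := mem_neighborClass_iff Vp c G hdeg hw (v := v)
  refine (derClosed_controlledFamilies Vp G γ Vstar hU hc).mem_slopeAlgebra_of_forall_eq
    (neighborFamily_mem_controlledFamilies Vp G γ Vstar hU hUc hsym hc)
    (fun v hv => isAdjusted_neighborFamily Vp c G hdeg (hne.1 hv)) (fun v hv => ?_)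
    fun v u huv => ?_
  · exact Set.indicator_of_notMem (fun h => hne.2 hw ((hclass.1 h).symm.trans hv)) _
  · simp only [Set.indicator_apply, Finset.mem_coe, hclass, huv, Pi.one_apply]

end Fields

theorem top_degree_class_mem_general
    {V : Type} [Fintype V] [DecidableEq V] (G : SimpleGraph V) [DecidableRel G.Adj]
    (Vstar : Finset V) (γ : V → ℝ) (U : V → ℝ → ℝ) (Vp : V → V → Polynomial ℝ) (c : V)
    (hU : ∀ v, ContDiff ℝ (⊤ : ℕ∞) (U v))
    (hsym : ∀ v, G.Adj c v → ∀ x : ℝ, (Vp v c).eval x = (Vp c v).eval (-x))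
    (hdeg : ∀ v, G.Adj c v → 3 ≤ (Vp c v).natDegree)
    (hc : Controllable Vstar (X0 G γ U Vp) c) (v₀ : V) (hv₀ : v₀ ∈ Tset G c) :
    MM Vstar (X0 G γ U Vp) (dpSum (neighborClass Vp c G v₀)) ∧
    MM Vstar (X0 G γ U Vp)
      (fun x => ((0 : V → ℝ), ∑ v ∈ neighborClass Vp c G v₀, Pi.single v (xv Vp c v x))) := by
  have hU' (v : V) : Differentiable ℝ (deriv (U v)) :=
    (contDiff_infty_iff_deriv.1 (hU v)).2.differentiable (by simp)
  have hN : DerClosed (controlledFamilies Vp Vstar hc) :=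
    derClosed_controlledFamilies Vp G γ Vstar hU' hc
  have hlinear := monomialFamily_one_neighborClass_mem Vp G γ Vstar hU' (hU c) hsym hdeg hc hv₀
  rw [dpSum_eq_famField Vp c, sum_single_xv_eq_famField]
  exact ⟨(hN.monomialFamily_mem_of_succ hlinear).2, hlinear.2⟩

/-- Lemma 4.12. Assume `c` is controllable and let `𝒯_i` be an
equivalence class of neighbors of `c` (the class of some `v₀ ∈ 𝒯`) with `𝒯_i ⊆ D^d`.
Then `∑_{v∈𝒯_i} ∂_{p_v} ∈ 𝓜` and `∑_{v∈𝒯_i} x_v ∂_{p_v} ∈ 𝓜`. -/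
theorem top_degree_class_mem
    {V : Type} [Fintype V] [DecidableEq V] (G : SimpleGraph V) [DecidableRel G.Adj]
    (Vstar : Finset V) (γ : V → ℝ) (U : V → ℝ → ℝ) (Vp : V → V → Polynomial ℝ)
    (hγpos : ∀ v ∈ Vstar, 0 < γ v) (hγ0 : ∀ v ∉ Vstar, γ v = 0)
    (hU : ∀ v, ContDiff ℝ (⊤ : ℕ∞) (U v))
    (hsym : ∀ u v, G.Adj u v → ∀ x : ℝ, (Vp v u).eval x = (Vp u v).eval (-x))
    (hdeg : ∀ u v, G.Adj u v → 3 ≤ (Vp u v).natDegree)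
    (c : V) (hc : Controllable Vstar (X0 G γ U Vp) c)
    (v₀ : V) (hv₀ : v₀ ∈ Tset G c)
    (hsub : ((Tset G c).filter fun w =>
        PolyEquiv (derivative (derivative (Vp c w))) (derivative (derivative (Vp c v₀))))
      ⊆ Dd G Vp c) :
    MM Vstar (X0 G γ U Vp)
      (dpSum ((Tset G c).filter fun w =>
        PolyEquiv (derivative (derivative (Vp c w))) (derivative (derivative (Vp c v₀))))) ∧
    MM Vstar (X0 G γ U Vp)
      (fun x => ((0 : V → ℝ),
        ∑ v ∈ (Tset G c).filter (fun w =>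
          PolyEquiv (derivative (derivative (Vp c w))) (derivative (derivative (Vp c v₀)))),
          Pi.single v (xv Vp c v x))) := by
  exact top_degree_class_mem_general G Vstar γ U Vp c hU (hsym c) (hdeg c) hc v₀ hv₀
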